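/- Let k ∈ ℕ ∪ {0} and let E be a measurable space. For each 0 ≤ j ≤ k, let T_j : E → E be a measurable map whose range contains at most 2^j points. Then every probability measure μ on E can be decomposed as μ = (1/2^k)·λ^{(0)} + ∑_{j=1}^{k} (1/2^{k−j+1})·λ^{(j)} for some probability measures λ^{(0)},…,λ^{(k)} on E such that (T_j)_#λ^{(j)} ∈ 𝒰(E, 2^j) for every 0 ≤ j ≤ k. -/

import Mathlib

open MeasureTheory ENNReal

noncomputable section

/-- The (uniform) discrete measure `(1/r) ∑ δ_{x i}`; the set `𝒰(E, r)` of the paper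
consists of all measures of this form. -/
def empiricalMeasure {E : Type*} [MeasurableSpace E] (r : ℕ) (x : Fin r → E) :
    Measure E :=
  (r : ℝ≥0∞)⁻¹ • ∑ i, Measure.dirac (x i)

end

/-!
The measure `μ` is peeled from the top index down: it suffices to write a probability measure
`μ` as the average of two probability measures `λ` and `ρ` with `T_# λ` uniform on `N` points,
and to continue with `ρ`. On the at most `N` points of the range, rounding the weights of
`2N • T_# μ` down loses at most `N` of the total mass `2N`, so there are `N` points, counted with
multiplicity, whose empirical measure is dominated by `2 • T_# μ`. The Radon–Nikodym derivative
pulls it back to a measure `λ ≤ 2 • μ`, and `ρ = 2 • μ - λ`.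
-/

lemma le_sum_floor {ι : Type*} [Fintype ι] {N : ℕ} {w : ι → ℝ}
    (h : N + Fintype.card ι ≤ ∑ i, w i) : N ≤ ∑ i, ⌊w i⌋₊ := by
  have floor_loss : ∑ i, w i ≤ ∑ i, ((⌊w i⌋₊ : ℝ) + 1) :=
    Finset.sum_le_sum fun i _ ↦ (Nat.lt_floor_add_one (w i)).le
  simp only [Finset.sum_add_distrib, Finset.sum_const, Finset.card_univ, nsmul_eq_mul,
    mul_one] at floor_loss
  have : (N : ℝ) ≤ ∑ i, (⌊w i⌋₊ : ℝ) := by linarith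
  exact_mod_cast this

lemma exists_sum_comp_le_sum_nsmul {ι M : Type*} [Fintype ι] [AddCommMonoid M] [PartialOrder M]
    [IsOrderedAddMonoid M] {N : ℕ} {n : ι → ℕ} (hN : N ≤ ∑ i, n i) {f : ι → M}
    (hf : ∀ i, 0 ≤ f i) : ∃ x : Fin N → ι, ∑ j, f (x j) ≤ ∑ i, n i • f i := by
  obtain ⟨e⟩ : Nonempty (Fin N ↪ Σ i, Fin (n i)) :=
    Function.Embedding.nonempty_of_card_le (by simpa using hN)
  refine ⟨fun j ↦ (e j).1, ?_⟩
  calc ∑ j, f (e j).1 = ∑ p ∈ Finset.univ.map e, f p.1 := by rw [Finset.sum_map]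
    _ ≤ ∑ p : Σ i, Fin (n i), f p.1 :=
        Finset.sum_le_sum_of_subset_of_nonneg (Finset.subset_univ _) fun p _ _ ↦ hf p.1
    _ = ∑ i, n i • f i := by simp [Fintype.sum_sigma]

lemma exists_sum_dirac_le {α : Type*} [Finite α] [MeasurableSpace α] {N : ℕ} (ν : Measure α)
    [IsFiniteMeasure ν] (h : N + Nat.card α ≤ ν.real Set.univ) :
    ∃ x : Fin N → α, ∑ i, Measure.dirac (x i) ≤ ν := by
  have := Fintype.ofFinite α
  obtain ⟨s, hs⟩ := Measure.exists_sum_smul_dirac ν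
  have := Fintype.ofFinite s
  rw [Measure.sum_fintype] at hs
  have total : ν.real Set.univ = ∑ a : s, ν.real (measurableAtom (a : α)) := by
    conv_lhs => rw [hs]
    simp [Measure.real, ENNReal.toReal_sum]
  have card_le : (Fintype.card s : ℝ) ≤ Nat.card α := by
    rw [Fintype.card_eq_nat_card]
    exact_mod_cast Finite.card_subtype_le (· ∈ s)
  have le_sum : N ≤ ∑ a : s, ⌊ν.real (measurableAtom (a : α))⌋₊ := le_sum_floor (by linarith)
  obtain ⟨x, hx⟩ := exists_sum_comp_le_sum_nsmul le_sum
    (f := fun a ↦ Measure.dirac (a : α)) fun _ ↦ Measure.zero_le _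
  refine ⟨fun i ↦ x i, hx.trans ?_⟩
  conv_rhs => rw [hs]
  refine Finset.sum_le_sum fun a _ ↦ ?_
  rw [← Nat.cast_smul_eq_nsmul ℝ≥0∞]
  gcongr
  rw [← ENNReal.ofReal_natCast, ← ofReal_measureReal]
  exact ENNReal.ofReal_le_ofReal (Nat.floor_le measureReal_nonneg)

section Pushforward

variable {E F : Type*} [MeasurableSpace E] [MeasurableSpace F] {T : E → F}

lemma map_withDensity_comp {μ : Measure E} (hT : Measurable T) {f : F → ℝ≥0∞} (hf : Measurable f) :
    (μ.withDensity (f ∘ T)).map T = (μ.map T).withDensity f := by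
  ext B hB
  rw [Measure.map_apply hT hB, withDensity_apply _ (hT hB), withDensity_apply _ hB,
    setLIntegral_map hB hf hT]
  rfl

lemma exists_le_map_eq_of_le_map {μ : Measure E} [IsFiniteMeasure μ] (hT : Measurable T)
    {κ : Measure F} (hκ : κ ≤ μ.map T) : ∃ lam ≤ μ, lam.map T = κ := by
  have : IsFiniteMeasure κ := isFiniteMeasure_of_le _ hκ
  have density_le_one : κ.rnDeriv (μ.map T) ∘ T ≤ᵐ[μ] 1 :=
    ae_of_ae_map hT.aemeasurable (Measure.rnDeriv_le_one_of_le hκ)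
  refine ⟨μ.withDensity (κ.rnDeriv (μ.map T) ∘ T), ?_, ?_⟩
  · simpa only [withDensity_one] using withDensity_mono density_le_one
  · rw [map_withDensity_comp hT (Measure.measurable_rnDeriv _ _),
      Measure.withDensity_rnDeriv_eq _ _ (Measure.absolutelyContinuous_of_le hκ)]

lemma map_empiricalMeasure (hT : Measurable T) {r : ℕ} (x : Fin r → E) :
    (empiricalMeasure r x).map T = empiricalMeasure r (T ∘ x) := by
  simp only [empiricalMeasure, Measure.map_smul, Measure.map_finset_sum hT.aemeasurable,
    Measure.map_dirac' hT, Function.comp_apply]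

end Pushforward

instance isProbabilityMeasure_empiricalMeasure {E : Type*} [MeasurableSpace E] {r : ℕ} [NeZero r]
    (x : Fin r → E) : IsProbabilityMeasure (empiricalMeasure r x) :=
  ⟨by simp [empiricalMeasure, ENNReal.inv_mul_cancel, NeZero.ne r]⟩

lemma empiricalMeasure_const {E : Type*} [MeasurableSpace E] (r : ℕ) [NeZero r] (y : E) :
    empiricalMeasure r (fun _ ↦ y) = Measure.dirac y := by
  rw [empiricalMeasure, Finset.sum_const, Finset.card_univ, Fintype.card_fin,
    ← Nat.cast_smul_eq_nsmul ℝ≥0∞, smul_smul,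
    ENNReal.inv_mul_cancel (by simp [NeZero.ne r]) (by simp), one_smul]

lemma exists_empiricalMeasure_le_two_smul {α : Type*} [Finite α] [MeasurableSpace α] {N : ℕ}
    [NeZero N] (hN : Nat.card α ≤ N) (ν : Measure α) [IsProbabilityMeasure ν] :
    ∃ x : Fin N → α, empiricalMeasure N x ≤ (2 : ℝ≥0∞) • ν := by
  have : IsFiniteMeasure ((2 * N : ℝ≥0∞) • ν) := ν.smul_finite (by finiteness)
  have card_le : (Nat.card α : ℝ) ≤ N := by exact_mod_cast hN
  have total : ((2 * N : ℝ≥0∞) • ν).real Set.univ = 2 * N := by simp [Measure.real]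
  obtain ⟨x, hx⟩ := exists_sum_dirac_le (N := N) ((2 * N : ℝ≥0∞) • ν) (by rw [total]; linarith)
  refine ⟨x, ?_⟩
  calc empiricalMeasure N x ≤ (N : ℝ≥0∞)⁻¹ • (2 * N : ℝ≥0∞) • ν := by
        unfold empiricalMeasure
        gcongr
    _ = (2 : ℝ≥0∞) • ν := by
        rw [smul_smul, mul_left_comm,
          ENNReal.inv_mul_cancel (by simp [NeZero.ne N]) (by finiteness), mul_one]

lemma isProbabilityMeasure_two_smul_sub {E : Type*} [MeasurableSpace E] {μ lam : Measure E}
    [IsProbabilityMeasure μ] [IsProbabilityMeasure lam] (h : lam ≤ (2 : ℝ≥0∞) • μ) :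
    IsProbabilityMeasure ((2 : ℝ≥0∞) • μ - lam) := by
  constructor
  rw [Measure.sub_apply .univ h]
  simp [← one_add_one_eq_two]

section Splitting

variable {E F : Type*} [MeasurableSpace E] [MeasurableSpace F] {T : E → F}

lemma exists_le_two_smul_map_eq_empiricalMeasure (hT : Measurable T)
    (hfin : (Set.range T).Finite) {N : ℕ} [NeZero N] (hcard : (Set.range T).ncard ≤ N)
    (μ : Measure E) [IsProbabilityMeasure μ] :
    ∃ lam ≤ (2 : ℝ≥0∞) • μ, ∃ x : Fin N → F, lam.map T = empiricalMeasure N x := by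
  have : Finite (Set.range T) := hfin
  have hT' : Measurable (Set.rangeFactorization T) := hT.subtype_mk
  have := Measure.isProbabilityMeasure_map (μ := μ) hT'.aemeasurable
  have : IsFiniteMeasure ((2 : ℝ≥0∞) • μ) := μ.smul_finite (by finiteness)
  obtain ⟨x, hx⟩ := exists_empiricalMeasure_le_two_smul hcard (μ.map (Set.rangeFactorization T))
  rw [← Measure.map_smul] at hx
  obtain ⟨lam, hlam, hmap⟩ := exists_le_map_eq_of_le_map hT' hx
  refine ⟨lam, hlam, Subtype.val ∘ x, ?_⟩
  rw [← map_empiricalMeasure measurable_subtype_coe, ← hmap,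
    Measure.map_map measurable_subtype_coe hT']
  rfl

lemma exists_eq_average_map_eq_empiricalMeasure (hT : Measurable T)
    (hfin : (Set.range T).Finite) {N : ℕ} (hcard : (Set.range T).ncard ≤ N)
    (μ : Measure E) [IsProbabilityMeasure μ] :
    ∃ lam rho : Measure E,
      (IsProbabilityMeasure lam ∧ ∃ x : Fin N → F, lam.map T = empiricalMeasure N x) ∧
      IsProbabilityMeasure rho ∧ μ = (2 : ℝ≥0∞)⁻¹ • lam + (2 : ℝ≥0∞)⁻¹ • rho := by
  have : Nonempty E := nonempty_of_isProbabilityMeasure μ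
  have : NeZero N := ⟨(((Set.ncard_pos hfin).2 (Set.range_nonempty T)).trans_le hcard).ne'⟩
  obtain ⟨lam, hlam, x, hx⟩ := exists_le_two_smul_map_eq_empiricalMeasure hT hfin hcard μ
  have : IsProbabilityMeasure lam :=
    (Measure.isProbabilityMeasure_map_iff hT.aemeasurable).1 (hx ▸ inferInstance)
  refine ⟨lam, (2 : ℝ≥0∞) • μ - lam, ⟨this, x, hx⟩, isProbabilityMeasure_two_smul_sub hlam, ?_⟩
  rw [← smul_add, add_comm, Measure.sub_add_cancel_of_le hlam, smul_smul,
    ENNReal.inv_mul_cancel two_ne_zero ofNat_ne_top, one_smul]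

lemma exists_map_eq_dirac (hT : (Set.range T).Subsingleton) (μ : Measure E)
    [IsProbabilityMeasure μ] : ∃ y, μ.map T = Measure.dirac y := by
  obtain ⟨x₀⟩ := nonempty_of_isProbabilityMeasure μ
  have hconst : T = fun _ ↦ T x₀ := funext fun x ↦ hT ⟨x, rfl⟩ ⟨x₀, rfl⟩
  exact ⟨T x₀, by rw [hconst, Measure.map_const, measure_univ, one_smul]⟩

end Splitting

section DyadicMixture

variable {M : Type*} [AddCommMonoid M] [Module ℝ≥0∞ M]

/-- The combination of `v 0, …, v k` with the weights `2⁻ᵏ, 2⁻ᵏ, 2⁻ᵏ⁺¹, …, 2⁻¹` of the dyadic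
decomposition; the weights add up to `1`. For `1 ≤ j ≤ k` the subtraction in the exponent
`k - j + 1` does not truncate. -/
noncomputable def dyadicMixture (k : ℕ) (v : ℕ → M) : M :=
  ((2 : ℝ≥0∞) ^ k)⁻¹ • v 0 + ∑ j ∈ Finset.Icc 1 k, ((2 : ℝ≥0∞) ^ (k - j + 1))⁻¹ • v j

lemma dyadicMixture_congr {k : ℕ} {v w : ℕ → M} (h : ∀ j ≤ k, v j = w j) :
    dyadicMixture k v = dyadicMixture k w := by
  rw [dyadicMixture, dyadicMixture, h 0 k.zero_le,
    Finset.sum_congr rfl fun j hj ↦ by rw [h j (Finset.mem_Icc.1 hj).2]]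

lemma dyadicMixture_zero (v : ℕ → M) : dyadicMixture 0 v = v 0 := by
  simp [dyadicMixture]

lemma dyadicMixture_succ (k : ℕ) (v : ℕ → M) :
    dyadicMixture (k + 1) v = (2 : ℝ≥0∞)⁻¹ • v (k + 1) + (2 : ℝ≥0∞)⁻¹ • dyadicMixture k v := by
  have halve (n : ℕ) : ((2 : ℝ≥0∞) ^ (n + 1))⁻¹ = 2⁻¹ * (2 ^ n)⁻¹ := by
    rw [ENNReal.inv_pow, ENNReal.inv_pow, pow_succ']
  have halve_sum : ∑ j ∈ Finset.Icc 1 k, ((2 : ℝ≥0∞) ^ (k + 1 - j + 1))⁻¹ • v j =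
      (2 : ℝ≥0∞)⁻¹ • ∑ j ∈ Finset.Icc 1 k, ((2 : ℝ≥0∞) ^ (k - j + 1))⁻¹ • v j := by
    rw [Finset.smul_sum]
    refine Finset.sum_congr rfl fun j hj ↦ ?_
    rw [Nat.sub_add_comm (Finset.mem_Icc.1 hj).2, halve, mul_smul]
  rw [dyadicMixture, dyadicMixture, Finset.sum_Icc_succ_top (Nat.le_add_left 1 k), halve_sum,
    halve k, mul_smul, smul_add, Nat.sub_self, zero_add, pow_one]
  abel

lemma exists_eq_dyadicMixture {P : ℕ → M → Prop} {Q : M → Prop} (k : ℕ)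
    (zero : ∀ m, Q m → P 0 m)
    (split : ∀ j < k, ∀ m, Q m →
      ∃ a b, P (j + 1) a ∧ Q b ∧ m = (2 : ℝ≥0∞)⁻¹ • a + (2 : ℝ≥0∞)⁻¹ • b)
    {m : M} (hm : Q m) : ∃ v, m = dyadicMixture k v ∧ ∀ j ≤ k, P j (v j) := by
  induction k generalizing m with
  | zero =>
    refine ⟨fun _ ↦ m, (dyadicMixture_zero fun _ ↦ m).symm, fun j hj ↦ ?_⟩
    rw [Nat.le_zero.1 hj]
    exact zero m hm
  | succ k ih =>
    obtain ⟨a, b, ha, hb, rfl⟩ := split k k.lt_succ_self m hm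
    obtain ⟨v, rfl, hv⟩ := ih (fun j hj ↦ split j (hj.trans k.lt_succ_self)) hb
    have update_of_le : ∀ j ≤ k, Function.update v (k + 1) a j = v j := fun j hj ↦
      Function.update_of_ne (Nat.lt_succ_of_le hj).ne _ _
    refine ⟨Function.update v (k + 1) a, ?_, fun j hj ↦ ?_⟩
    · rw [dyadicMixture_succ, Function.update_self, dyadicMixture_congr update_of_le]
    · rcases Nat.le_succ_iff.1 hj with hj | rfl
      · exact update_of_le j hj ▸ hv j hj
      · rwa [Function.update_self]

end DyadicMixture

theorem stmt_19_general {E : Type*} [MeasurableSpace E] {F : ℕ → Type*}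
    [∀ j, MeasurableSpace (F j)] (k : ℕ) (N : ℕ → ℕ) (hN : N 0 = 1)
    (T : ∀ j, E → F j) (hTmeas : ∀ j ≤ k, Measurable (T j))
    (hTfin : ∀ j ≤ k, (Set.range (T j)).Finite)
    (hTcard : ∀ j ≤ k, (Set.range (T j)).ncard ≤ N j)
    (μ : Measure E) [IsProbabilityMeasure μ] :
    ∃ lam : ℕ → Measure E,
      (∀ j ≤ k, IsProbabilityMeasure (lam j)) ∧
      μ = dyadicMixture k lam ∧
      ∀ j ≤ k, ∃ x : Fin (N j) → F j, (lam j).map (T j) = empiricalMeasure (N j) x := by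
  have : NeZero (N 0) := ⟨hN ▸ one_ne_zero⟩
  have range_zero : (Set.range (T 0)).Subsingleton := fun _ hx _ hy ↦
    (Set.ncard_le_one (hTfin 0 k.zero_le)).1 (hN ▸ hTcard 0 k.zero_le) _ hx _ hy
  obtain ⟨lam, hμ, hlam⟩ := exists_eq_dyadicMixture (Q := IsProbabilityMeasure)
    (P := fun j lam ↦ IsProbabilityMeasure lam ∧
      ∃ x : Fin (N j) → F j, lam.map (T j) = empiricalMeasure (N j) x) k
    (fun ν hν ↦
      let ⟨y, hy⟩ := exists_map_eq_dirac range_zero ν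
      ⟨hν, fun _ ↦ y, hy.trans (empiricalMeasure_const _ y).symm⟩)
    (fun j hj ν hν ↦
      exists_eq_average_map_eq_empiricalMeasure (hTmeas _ hj) (hTfin _ hj) (hTcard _ hj) ν)
    (m := μ) inferInstance
  exact ⟨lam, fun j hj ↦ (hlam j hj).1, hμ, fun j hj ↦ (hlam j hj).2⟩

/-- **Lemma (advdecomp).** Let `k ∈ ℕ ∪ {0}` and let `E` be a measurable space. For
each `0 ≤ j ≤ k`, let `T_j : E → E` be a measurable map whose range contains at most
`2^j` points. Then every probability measure `μ` on `E` can be decomposed as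
`μ = (1/2^k) λ⁽⁰⁾ + ∑_{j=1}^{k} (1/2^{k−j+1}) λ⁽ʲ⁾` for some probability measures
`λ⁽⁰⁾, …, λ⁽ᵏ⁾` on `E` such that `(T_j)_# λ⁽ʲ⁾ ∈ 𝒰(E, 2^j)` for every `0 ≤ j ≤ k`. -/
theorem stmt_19 {E : Type*} [MeasurableSpace E] (k : ℕ)
    (T : ℕ → E → E) (hTmeas : ∀ j ≤ k, Measurable (T j))
    (hTfin : ∀ j ≤ k, (Set.range (T j)).Finite)
    (hTcard : ∀ j ≤ k, (Set.range (T j)).ncard ≤ 2 ^ j)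
    (μ : Measure E) [IsProbabilityMeasure μ] :
    ∃ lam : ℕ → Measure E,
      (∀ j ≤ k, IsProbabilityMeasure (lam j)) ∧
      μ = ((2 : ℝ≥0∞) ^ k)⁻¹ • lam 0 +
            ∑ j ∈ Finset.Icc 1 k, ((2 : ℝ≥0∞) ^ (k - j + 1))⁻¹ • lam j ∧
      ∀ j ≤ k, ∃ x : Fin (2 ^ j) → E, (lam j).map (T j) = empiricalMeasure (2 ^ j) x :=
  stmt_19_general k (2 ^ ·) (pow_zero 2) T hTmeas hTfin hTcard μ
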